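/- Fix an integer d ≥ 1, p ∈ (1,∞), a penalty function φ, and let (μ_t)_{t≥0} be a convolution semigroup in 𝒫_p(ℝ^d). Then for every f ∈ C₀(ℝ^d), t ≥ 0, n ∈ ℕ, and x ∈ ℝ^d: ∫_{ℝ^d} f(x+y) μ_t(dy) ≤ 𝒮^n(t)f(x) ≤ S(t)f(x). -/

import Mathlib

open MeasureTheory Filter Topology ENNReal NNReal Set ZeroAtInfty
noncomputable section

/-- Euclidean space ℝ^d. -/
abbrev Ed (d : ℕ) := EuclideanSpace ℝ (Fin d)

/-- `𝒫_p(ℝ^d)`: Borel probability measures with finite `p`-th moment. -/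
def MemPp {d : ℕ} (p : ℝ) (μ : Measure (Ed d)) : Prop :=
  IsProbabilityMeasure μ ∧ ∫⁻ x, (‖x‖₊ : ℝ≥0∞) ^ p ∂μ < ∞

/-- `γ` is a coupling of `μ` and `ν`. -/
def IsCoupling {d : ℕ} (γ : Measure (Ed d × Ed d)) (μ ν : Measure (Ed d)) : Prop :=
  γ.map Prod.fst = μ ∧ γ.map Prod.snd = ν

/-- The `p`-Wasserstein distance `𝒲_p(μ, ν)`. -/
def Wp {d : ℕ} (p : ℝ) (μ ν : Measure (Ed d)) : ℝ :=
  (⨅ γ ∈ {γ : Measure (Ed d × Ed d) | IsCoupling γ μ ν},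
    (∫⁻ q, (‖q.2 - q.1‖₊ : ℝ≥0∞) ^ p ∂γ) ^ (1 / p)).toReal

/-- The scaled penalty `φ_t(r) = t·φ(r/t)` for `t > 0`; `φ_0(0) = 0`, `φ_0(r) = ∞` for `r > 0`. -/
def phit (φ : ℝ≥0 → ℝ≥0∞) (t : ℝ) (r : ℝ≥0) : ℝ≥0∞ :=
  if 0 < t then (t.toNNReal : ℝ≥0∞) * φ (r / t.toNNReal) else (if r = 0 then 0 else ∞)

/-- `φ` is a penalty function: lower semicontinuous, convex, increasing, not constant,
`φ(0) = 0`, and `x ↦ φ(x^{1/p})` is convex. -/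
structure IsPenalty (p : ℝ) (φ : ℝ≥0 → ℝ≥0∞) : Prop where
  lsc : LowerSemicontinuous φ
  convex : ∀ a b l m : ℝ≥0, l + m = 1 →
    φ (l * a + m * b) ≤ (l : ℝ≥0∞) * φ a + (m : ℝ≥0∞) * φ b
  mono : Monotone φ
  not_const : ∃ a b, φ a ≠ φ b
  map_zero : φ 0 = 0
  convex_rpow : ∀ a b l m : ℝ≥0, l + m = 1 →
    φ ((l * a + m * b) ^ (1 / p)) ≤ (l : ℝ≥0∞) * φ (a ^ (1 / p)) + (m : ℝ≥0∞) * φ (b ^ (1 / p))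

/-- The convex conjugate `φ*(y) = sup_{x ≥ 0} (xy − φ(x))`. -/
def phiStar (φ : ℝ≥0 → ℝ≥0∞) (y : ℝ≥0) : ℝ≥0∞ :=
  ⨆ x : ℝ≥0, ((x * y : ℝ≥0) : ℝ≥0∞) - φ x

/-- The one-step operator `S(t)f(x) = sup_ν ( ∫ f(x+y) ν(dy) − φ_t(𝒲_p(μ_t, ν)) )`. -/
def Sop {d : ℕ} (p : ℝ) (φ : ℝ≥0 → ℝ≥0∞) (μt : Measure (Ed d)) (t : ℝ)
    (f : Ed d → ℝ) (x : Ed d) : ℝ :=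
  sSup { r : ℝ | ∃ ν : Measure (Ed d), MemPp p ν ∧ ∃ c : ℝ, 0 ≤ c ∧
    phit φ t (Wp p μt ν).toNNReal ≤ ENNReal.ofReal c ∧ r = (∫ y, f (x + y) ∂ν) - c }

/-- The iterated operator `𝒮ⁿ(t) = S(2⁻ⁿ)^{∘ k} ∘ S(t − k·2⁻ⁿ)`, `k = ⌊2ⁿ t⌋`. -/
def SiterN {d : ℕ} (p : ℝ) (φ : ℝ≥0 → ℝ≥0∞) (μ : ℝ → Measure (Ed d)) (n : ℕ) (t : ℝ)
    (f : Ed d → ℝ) : Ed d → ℝ :=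
  (fun g => Sop p φ (μ ((2 : ℝ) ^ n)⁻¹) ((2 : ℝ) ^ n)⁻¹ g)^[⌊(2:ℝ)^n * t⌋₊]
    (Sop p φ (μ (t - ⌊(2:ℝ)^n * t⌋₊ * ((2:ℝ)^n)⁻¹)) (t - ⌊(2:ℝ)^n * t⌋₊ * ((2:ℝ)^n)⁻¹) f)

/-- The limiting operator `𝒮(t)f = lim_n 𝒮ⁿ(t)f` (a decreasing limit, i.e. an infimum). -/
def Slim {d : ℕ} (p : ℝ) (φ : ℝ≥0 → ℝ≥0∞) (μ : ℝ → Measure (Ed d)) (t : ℝ)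
    (f : Ed d → ℝ) (x : Ed d) : ℝ :=
  ⨅ n : ℕ, SiterN p φ μ n t f x

/-- `f ∈ C₀(ℝ^d)`: continuous and vanishing at infinity. -/
def IsC0 {d : ℕ} (f : Ed d → ℝ) : Prop :=
  Continuous f ∧ Tendsto f (cocompact (Ed d)) (𝓝 0)

/-- `(μ_t)_{t ≥ 0}` is a convolution semigroup in `𝒫_p(ℝ^d)`. -/
def IsConvSemigroup {d : ℕ} (p : ℝ) (μ : ℝ → Measure (Ed d)) : Prop :=
  μ 0 = Measure.dirac 0 ∧ (∀ s t : ℝ, 0 ≤ s → 0 ≤ t → μ (s + t) = (μ s).conv (μ t)) ∧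
    ∀ t : ℝ, 0 ≤ t → MemPp p (μ t)

/-- `𝒲_p(μ_t, δ_0) → 0` as `t ↓ 0`. -/
def WContinuousAtZero {d : ℕ} (p : ℝ) (μ : ℝ → Measure (Ed d)) : Prop :=
  Tendsto (fun t => Wp p (μ t) (Measure.dirac 0)) (𝓝[>] (0:ℝ)) (𝓝 0)

/-- The semigroup of the underlying Lévy process, `S^μ(t)f(x) = ∫ f(x+y) μ_t(dy)`. -/
def Smu {d : ℕ} (μ : ℝ → Measure (Ed d)) (t : ℝ) (f : Ed d → ℝ) (x : Ed d) : ℝ :=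
  ∫ y, f (x + y) ∂(μ t)

/-- `f ∈ D(A^μ)` with `A^μ f = Af`: `(S^μ(t)f − f)/t → Af` uniformly as `t ↓ 0`. -/
def HasGenerator {d : ℕ} (μ : ℝ → Measure (Ed d)) (f Af : Ed d → ℝ) : Prop :=
  TendstoUniformly (fun t x => (Smu μ t f x - f x) / t) Af (𝓝[>] (0:ℝ))

/-- `f ∈ C₀¹(ℝ^d)`: continuously differentiable, vanishing at infinity, with gradient
vanishing at infinity. -/
def IsC01 {d : ℕ} (f : Ed d → ℝ) : Prop :=
  IsC0 f ∧ ContDiff ℝ 1 f ∧ Tendsto (fun x => gradient f x) (cocompact (Ed d)) (𝓝 0)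

/-!
The lower bound holds because `ν = μ_t` is an admissible choice of zero cost at every step. The
upper bound is an induction resting on `S(s) ∘ S(t) ≤ S(s + t)`. Suppose `Y ∼ ν` is used in the
first step and, given `Y`, a conditional law `κ Y` in the second. Gluing couplings of `μ_s` with
`ν` and of `μ_t` with `κ Y` gives a coupling of `μ_s ∗ μ_t` with the law of `Y + Z`, `Z ∼ κ Y`, and
Minkowski's inequality bounds its cost by `𝒲_p(μ_s, ν) + ‖𝒲_p(μ_t, κ Y)‖_{L^p}`. Convexity of `φ`
yields `φ_{s+t}(a + b) ≤ φ_s(a) + φ_t(b)`, and convexity of `x ↦ φ_t(x^{1/p})` turns the second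
summand into `E[φ_t(𝒲_p(μ_t, κ Y))]` by Jensen's inequality.

To make `κ` a kernel without a measurable selection theorem, the operators are applied to bounded
lower semicontinuous functions, a class they preserve: on a second countable space a supremum of
lower semicontinuous functions is the supremum of countably many of them, so nearly optimal
measures can be chosen among countably many, with a measurable index.
-/

section Semicontinuity

variable {X α : Type*} [TopologicalSpace X] [MeasurableSpace α] {ν : Measure α}

lemma lowerSemicontinuous_integral_of_nonneg [FirstCountableTopology X] {g : X → α → ℝ}
    (hg : ∀ x, Integrable (g x) ν) (hg_nonneg : ∀ x y, 0 ≤ g x y)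
    (hlsc : ∀ y, LowerSemicontinuous fun x => g x y) :
    LowerSemicontinuous fun x => ∫ y, g x y ∂ν := by
  have ofReal_integral (x : X) :
      ENNReal.ofReal (∫ y, g x y ∂ν) = ∫⁻ y, ENNReal.ofReal (g x y) ∂ν :=
    ofReal_integral_eq_lintegral_ofReal (hg x) (ae_of_all _ (hg_nonneg x))
  have fatou : LowerSemicontinuous fun x => ENNReal.ofReal (∫ y, g x y ∂ν) := by
    simp only [ofReal_integral]
    refine lowerSemicontinuous_iff_le_liminf.2 fun x => ?_
    refine le_trans (lintegral_mono fun y => ?_)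
      (lintegral_liminf_le' fun x' => (hg x').aemeasurable.ennreal_ofReal)
    exact (ENNReal.continuous_ofReal.comp_lowerSemicontinuous (hlsc y)
      ENNReal.ofReal_mono).le_liminf x
  intro x z hz
  rcases lt_or_ge z 0 with hz_neg | hz_nonneg
  · exact Eventually.of_forall fun x' => hz_neg.trans_le (integral_nonneg (hg_nonneg x'))
  · simpa only [ENNReal.ofReal_lt_ofReal_iff_of_nonneg hz_nonneg] using
      fatou x (ENNReal.ofReal z) ((ENNReal.ofReal_lt_ofReal_iff_of_nonneg hz_nonneg).2 hz)

lemma lowerSemicontinuous_integral [FirstCountableTopology X] {g : X → α → ℝ} {b : α → ℝ}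
    (hg : ∀ x, Integrable (g x) ν) (hb : Integrable b ν) (hbg : ∀ x y, b y ≤ g x y)
    (hlsc : ∀ y, LowerSemicontinuous fun x => g x y) :
    LowerSemicontinuous fun x => ∫ y, g x y ∂ν := by
  have shifted : LowerSemicontinuous fun x => ∫ y, (g x y - b y) ∂ν :=
    lowerSemicontinuous_integral_of_nonneg (fun x => (hg x).sub hb)
      (fun x y => sub_nonneg.2 (hbg x y))
      fun y => by simpa only [sub_eq_add_neg] using (hlsc y).add lowerSemicontinuous_const
  simpa only [integral_sub (hg _) hb, sub_add_cancel] using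
    shifted.add (lowerSemicontinuous_const (z := ∫ y, b y ∂ν))

lemma lowerSemicontinuous_of_isLUB {𝓕 : Set (X → ℝ)} {s : X → ℝ}
    (h𝓕 : ∀ F ∈ 𝓕, LowerSemicontinuous F) (hs : IsLUB 𝓕 s) : LowerSemicontinuous s := by
  intro x z hz
  obtain ⟨_, ⟨F, hF, rfl⟩, hzF⟩ := (lt_isLUB_iff (isLUB_pi.1 hs x)).1 hz
  exact (h𝓕 F hF x z hzF).mono fun x' hx' => hx'.trans_le (hs.1 hF x')

lemma exists_measurable_index_lt_add [Nonempty X] [SecondCountableTopology X] [MeasurableSpace X]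
    [OpensMeasurableSpace X] {ι : Type*} {F : ι → X → ℝ} {s : X → ℝ}
    (hF : ∀ i, LowerSemicontinuous (F i)) (hs : IsLUB (range F) s) {ε : ℝ} (hε : 0 < ε) :
    ∃ (a : ℕ → ι) (k : X → ℕ), Measurable k ∧ ∀ x, s x < F (a (k x)) x + ε := by
  classical
  obtain ⟨𝓕, h𝓕, h𝓕_countable, h𝓕_lub⟩ :=
    exists_countable_lowerSemicontinuous_isLUB (forall_mem_range.2 hF) hs
  have h𝓕_nonempty : 𝓕.Nonempty :=
    ((isLUB_pi.1 h𝓕_lub (Classical.arbitrary X)).nonempty).of_image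
  obtain ⟨G, rfl⟩ := h𝓕_countable.exists_eq_range h𝓕_nonempty
  choose a ha using range_subset_range_iff_exists_comp.1 h𝓕
  have exists_lt (x : X) : ∃ n, s x < F (a n) x + ε := by
    obtain ⟨_, ⟨_, ⟨n, rfl⟩, rfl⟩, hn⟩ :=
      (lt_isLUB_iff (isLUB_pi.1 h𝓕_lub x)).1 (sub_lt_self (s x) hε)
    exact ⟨n, by simpa [ha] using sub_lt_iff_lt_add.1 hn⟩
  have s_measurable : Measurable s :=
    (lowerSemicontinuous_of_isLUB (forall_mem_range.2 hF) hs).measurable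
  exact ⟨a, fun x => Nat.find (exists_lt x),
    measurable_find exists_lt fun n =>
      measurableSet_lt s_measurable ((hF (a n)).measurable.add_const ε),
    fun x => Nat.find_spec (exists_lt x)⟩

/-- Real functions bounded by `M` in absolute value and lower semicontinuous: the class of test
functions that is preserved by the one-step operator. -/
structure IsBoundedLSC (M : ℝ) (g : X → ℝ) : Prop where
  abs_le : ∀ x, |g x| ≤ M
  lsc : LowerSemicontinuous g

namespace IsBoundedLSC

variable {M : ℝ} {g : X → ℝ}

lemma comp_const_add [Add X] [ContinuousAdd X] (hg : IsBoundedLSC M g) (x : X) :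
    IsBoundedLSC M fun y => g (x + y) :=
  ⟨fun y => hg.abs_le (x + y), hg.lsc.comp (continuous_const_add x)⟩

variable [MeasurableSpace X] {μ : Measure X} [IsProbabilityMeasure μ]

lemma integrable [OpensMeasurableSpace X] (hg : IsBoundedLSC M g) : Integrable g μ :=
  .of_bound hg.lsc.measurable.aestronglyMeasurable M (ae_of_all _ hg.abs_le)

lemma abs_integral_le (hg : IsBoundedLSC M g) : |∫ x, g x ∂μ| ≤ M := by
  simpa using norm_integral_le_of_norm_le_const (μ := μ) (f := g) (ae_of_all _ hg.abs_le)

end IsBoundedLSC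

end Semicontinuity

section Penalty

variable {p : ℝ} {φ : ℝ≥0 → ℝ≥0∞}

lemma IsPenalty.const_mul_comp_div (hp : p ≠ 0) (hφ : IsPenalty p φ) {T : ℝ≥0} (hT : 0 < T) :
    IsPenalty p fun r => (T : ℝ≥0∞) * φ (r / T) where
  lsc := (ENNReal.continuous_const_mul ENNReal.coe_ne_top).comp_lowerSemicontinuous
    (hφ.lsc.comp (by fun_prop)) fun _ _ h => mul_le_mul_right h _
  convex a b l m hlm := by
    calc (T : ℝ≥0∞) * φ ((l * a + m * b) / T)
        = T * φ (l * (a / T) + m * (b / T)) := by congr 2; ring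
      _ ≤ T * (l * φ (a / T) + m * φ (b / T)) := by gcongr; exact hφ.convex _ _ _ _ hlm
      _ = l * (T * φ (a / T)) + m * (T * φ (b / T)) := by ring
  mono _ _ hab := mul_le_mul_right (hφ.mono (by gcongr)) _
  not_const := by
    obtain ⟨a, b, hab⟩ := hφ.not_const
    refine ⟨a * T, b * T, ?_⟩
    simpa only [mul_div_cancel_right₀ _ hT.ne', ne_eq,
      ENNReal.mul_right_inj (ENNReal.coe_ne_zero.2 hT.ne') ENNReal.coe_ne_top] using hab
  map_zero := by simp [hφ.map_zero]
  convex_rpow a b l m hlm := by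
    have rpow_div (x : ℝ≥0) : x ^ (1 / p) / T = (x / T ^ p) ^ (1 / p) := by
      rw [NNReal.div_rpow, ← NNReal.rpow_mul, mul_one_div_cancel hp, NNReal.rpow_one]
    simp only [rpow_div]
    calc (T : ℝ≥0∞) * φ (((l * a + m * b) / T ^ p) ^ (1 / p))
        = T * φ ((l * (a / T ^ p) + m * (b / T ^ p)) ^ (1 / p)) := by congr 3; ring
      _ ≤ T * (l * φ ((a / T ^ p) ^ (1 / p)) + m * φ ((b / T ^ p) ^ (1 / p))) := by
        gcongr
        exact hφ.convex_rpow _ _ _ _ hlm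
      _ = l * (T * φ ((a / T ^ p) ^ (1 / p))) + m * (T * φ ((b / T ^ p) ^ (1 / p))) := by ring

lemma isPenalty_ite_eq_zero (hp : p ≠ 0) :
    IsPenalty p fun r : ℝ≥0 => if r = 0 then 0 else (∞ : ℝ≥0∞) := by
  have convex (a b l m : ℝ≥0) : (if l * a + m * b = 0 then 0 else (∞ : ℝ≥0∞)) ≤
      l * (if a = 0 then 0 else ∞) + m * (if b = 0 then 0 else ∞) := by
    by_cases ha : a = 0 <;> by_cases hb : b = 0 <;> by_cases hl : l = 0 <;> by_cases hm : m = 0 <;>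
      simp [ha, hb, hl, hm]
  exact {
    lsc := by
      intro r z hz
      by_cases hr : r = 0
      · simp [hr] at hz
      · filter_upwards [isOpen_ne.mem_nhds hr] with r' hr'
        simpa [hr, hr'] using hz
    convex := fun a b l m _ => convex a b l m
    mono := by
      intro a b hab
      by_cases hb : b = 0
      · simp [hb, le_zero_iff.1 (hb ▸ hab)]
      · simp [hb]
    not_const := ⟨0, 1, by simp⟩
    map_zero := if_pos rfl
    convex_rpow := fun a b l m _ => by
      simpa [NNReal.rpow_eq_zero_iff, hp] using convex a b l m }

lemma isPenalty_phit (hp : p ≠ 0) (hφ : IsPenalty p φ) (t : ℝ) : IsPenalty p (phit φ t) := by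
  by_cases ht : 0 < t
  · have phit_eq : phit φ t = fun r => (t.toNNReal : ℝ≥0∞) * φ (r / t.toNNReal) :=
      funext fun _ => if_pos ht
    exact phit_eq ▸ hφ.const_mul_comp_div hp (Real.toNNReal_pos.2 ht)
  · have phit_eq : phit φ t = fun r => if r = 0 then 0 else ∞ := funext fun _ => if_neg ht
    exact phit_eq ▸ isPenalty_ite_eq_zero hp

lemma phit_add_add_le (hφ : IsPenalty p φ) {s t : ℝ} (hs : 0 ≤ s) (ht : 0 ≤ t) (a b : ℝ≥0) :
    phit φ (s + t) (a + b) ≤ phit φ s a + phit φ t b := by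
  rcases hs.eq_or_lt with rfl | hs
  · by_cases ha : a = 0 <;> simp [phit, ha]
  rcases ht.eq_or_lt with rfl | ht
  · by_cases hb : b = 0 <;> simp [phit, hb]
  simp only [phit, hs, ht, add_pos hs ht, if_true, Real.toNNReal_add hs.le ht.le]
  have hS : 0 < s.toNNReal := Real.toNNReal_pos.2 hs
  have hT : 0 < t.toNNReal := Real.toNNReal_pos.2 ht
  generalize s.toNNReal = S at *
  generalize t.toNNReal = T at *
  calc ((S + T : ℝ≥0) : ℝ≥0∞) * φ ((a + b) / (S + T))
      = (S + T : ℝ≥0) * φ (S / (S + T) * (a / S) + T / (S + T) * (b / T)) := by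
        congr 2; field_simp
    _ ≤ (S + T : ℝ≥0) * ((S / (S + T) : ℝ≥0) * φ (a / S) + (T / (S + T) : ℝ≥0) * φ (b / T)) := by
        gcongr
        exact hφ.convex _ _ _ _ (by field_simp)
    _ = S * φ (a / S) + T * φ (b / T) := by
        rw [mul_add, ← mul_assoc, ← mul_assoc, ← ENNReal.coe_mul, ← ENNReal.coe_mul]
        congr <;> field_simp

lemma IsPenalty.natCast_mul_le (hφ : IsPenalty p φ) (n : ℕ) (a : ℝ≥0) : n * φ a ≤ φ (n * a) := by
  rcases eq_or_ne n 0 with rfl | hn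
  · simp
  have hn' : (n : ℝ≥0) ≠ 0 := Nat.cast_ne_zero.2 hn
  have convex_zero := hφ.convex (n * a) 0 (n : ℝ≥0)⁻¹ (1 - (n : ℝ≥0)⁻¹)
    (add_tsub_cancel_of_le (inv_le_one_of_one_le₀ (Nat.one_le_cast.2 (Nat.pos_of_ne_zero hn))))
  rw [inv_mul_cancel_left₀ hn', hφ.map_zero, mul_zero, mul_zero, add_zero, add_zero,
    ENNReal.coe_inv hn', ENNReal.coe_natCast] at convex_zero
  calc (n : ℝ≥0∞) * φ a ≤ n * ((n : ℝ≥0∞)⁻¹ * φ (n * a)) := by gcongr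
    _ = φ (n * a) :=
      ENNReal.mul_inv_cancel_left (Nat.cast_ne_zero.2 hn) (ENNReal.natCast_ne_top n)

lemma IsPenalty.exists_forall_le_imp_le (hφ : IsPenalty p φ) {C : ℝ≥0∞} (hC : C ≠ ∞) :
    ∃ R : ℝ≥0, ∀ r, φ r ≤ C → r ≤ R := by
  obtain ⟨a, ha⟩ : ∃ a, φ a ≠ 0 := by
    by_contra! h
    obtain ⟨a, b, hab⟩ := hφ.not_const
    exact hab ((h a).trans (h b).symm)
  obtain ⟨n, hn⟩ := ENNReal.exists_nat_mul_gt ha hC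
  refine ⟨n * a, fun r hr => ?_⟩
  by_contra! hlt
  exact (hn.trans_le ((hφ.natCast_mul_le n a).trans (hφ.mono hlt.le))).not_ge hr

/-- The real epigraph of `x ↦ φ (x ^ (1 / p))`, to which Jensen's inequality is applied as the
statement that the mean of a random point of a closed convex set stays in the set. -/
def powEpigraph (p : ℝ) (φ : ℝ≥0 → ℝ≥0∞) : Set (ℝ × ℝ) :=
  {q | 0 ≤ q.1 ∧ 0 ≤ q.2 ∧ φ (q.1.toNNReal ^ (1 / p)) ≤ ENNReal.ofReal q.2}

lemma IsPenalty.isClosed_powEpigraph (hp : 0 ≤ p) (hφ : IsPenalty p φ) :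
    IsClosed (powEpigraph p φ) := by
  have continuous_coords :
      Continuous fun q : ℝ × ℝ => (q.1.toNNReal ^ (1 / p), ENNReal.ofReal q.2) :=
    .prodMk ((NNReal.continuous_rpow_const (one_div_nonneg.2 hp)).comp
      (continuous_real_toNNReal.comp continuous_fst))
      (ENNReal.continuous_ofReal.comp continuous_snd)
  exact (isClosed_le continuous_const continuous_fst).inter
    ((isClosed_le continuous_const continuous_snd).inter
      (hφ.lsc.isClosed_epigraph.preimage continuous_coords))

lemma IsPenalty.convex_powEpigraph (hφ : IsPenalty p φ) : Convex ℝ (powEpigraph p φ) := by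
  rintro ⟨x, c⟩ ⟨hx, hc, hxc⟩ ⟨y, e⟩ ⟨hy, he, hye⟩ l m hl hm hlm
  dsimp only at hx hc hxc hy he hye
  simp only [powEpigraph, Prod.smul_mk, Prod.mk_add_mk, smul_eq_mul, mem_ofPred_eq]
  refine ⟨by positivity, by positivity, ?_⟩
  have hlm' : l.toNNReal + m.toNNReal = 1 := by
    rw [← Real.toNNReal_add hl hm, hlm, Real.toNNReal_one]
  rw [Real.toNNReal_add (by positivity) (by positivity), Real.toNNReal_mul hl,
    Real.toNNReal_mul hm, ENNReal.ofReal_add (by positivity) (by positivity),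
    ENNReal.ofReal_mul hl, ENNReal.ofReal_mul hm]
  exact (hφ.convex_rpow _ _ _ _ hlm').trans (add_le_add (mul_le_mul_right hxc _)
    (mul_le_mul_right hye _))

lemma IsPenalty.map_eLpNorm'_le {α : Type*} [MeasurableSpace α] {ν : Measure α}
    [IsProbabilityMeasure ν] (hp : 0 < p) (hφ : IsPenalty p φ) {w : α → ℝ≥0} (hw : Measurable w)
    (hw_top : eLpNorm' (fun y => (w y : ℝ≥0∞)) p ν ≠ ∞) {c : α → ℝ} (hc : Integrable c ν)
    (hc_nonneg : ∀ y, 0 ≤ c y) (hwc : ∀ y, φ (w y) ≤ ENNReal.ofReal (c y)) :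
    φ (eLpNorm' (fun y => (w y : ℝ≥0∞)) p ν).toNNReal ≤ ENNReal.ofReal (∫ y, c y ∂ν) := by
  have rpow_rpow (r : ℝ≥0) : (r ^ p) ^ (1 / p) = r := by
    rw [← NNReal.rpow_mul, mul_one_div_cancel hp.ne', NNReal.rpow_one]
  have lintegral_ne_top : ∫⁻ y, ((w y ^ p : ℝ≥0) : ℝ≥0∞) ∂ν ≠ ∞ := by
    simpa only [ENNReal.coe_rpow_of_nonneg _ hp.le, enorm_eq_self] using
      (lintegral_rpow_enorm_lt_top_of_eLpNorm'_lt_top hp hw_top.lt_top).ne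
  have hw_int : Integrable (fun y => ((w y ^ p : ℝ≥0) : ℝ)) ν :=
    integrable_toReal_of_lintegral_ne_top (by fun_prop) lintegral_ne_top
  have mean_mem := hφ.convex_powEpigraph.integral_mem (μ := ν) (hφ.isClosed_powEpigraph hp.le)
    (f := fun y => (((w y ^ p : ℝ≥0) : ℝ), c y))
    (ae_of_all _ fun y => ⟨by positivity, hc_nonneg y, by
      simpa only [Real.toNNReal_coe, rpow_rpow] using hwc y⟩)
    (hw_int.prodMk hc)
  rw [integral_pair hw_int hc] at mean_mem
  have integral_rpow : ∫ y, ((w y ^ p : ℝ≥0) : ℝ) ∂ν = (∫⁻ y, ((w y ^ p : ℝ≥0) : ℝ≥0∞) ∂ν).toReal :=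
    integral_toReal (by fun_prop) (ae_of_all _ fun _ => ENNReal.coe_lt_top)
  simpa only [integral_rpow, ENNReal.toReal, Real.toNNReal_coe, ENNReal.toNNReal_rpow,
    ENNReal.coe_rpow_of_nonneg _ hp.le, eLpNorm', enorm_eq_self] using mean_mem.2.2

end Penalty

section ConvKernel

open ProbabilityTheory

variable {α β J E : Type*} [MeasurableSpace α] [MeasurableSpace β] [MeasurableSpace E]

/-- The kernel drawing from `m j` with the index `j = k a` chosen measurably from the countable
set `J`. -/
def selectKernel [Countable J] [MeasurableSpace J] [MeasurableSingletonClass J] (m : J → Measure β)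
    {k : α → J} (hk : Measurable k) : Kernel α β :=
  (Kernel.ofFunOfCountable m).comap k hk

section selectKernel

variable [Countable J] [MeasurableSpace J] [MeasurableSingletonClass J] {m : J → Measure β}
  {k : α → J} (hk : Measurable k)

lemma selectKernel_apply (a : α) : selectKernel m hk a = m (k a) := rfl

instance [∀ j, IsProbabilityMeasure (m j)] : IsMarkovKernel (selectKernel m hk) :=
  ⟨fun a => inferInstanceAs (IsProbabilityMeasure (m (k a)))⟩

end selectKernel

variable [Add E] [MeasurableAdd₂ E]

/-- The law of `Y + Z`, where `Y` has law `μ` and `Z` has conditional law `κ Y` given `Y`. -/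
def convKernel (μ : Measure E) (κ : Kernel E E) : Measure E :=
  (μ ⊗ₘ κ).map fun q => q.1 + q.2

variable {μ : Measure E} {κ : Kernel E E}

instance [IsProbabilityMeasure μ] [IsMarkovKernel κ] : IsProbabilityMeasure (convKernel μ κ) :=
  Measure.isProbabilityMeasure_map measurable_add.aemeasurable

variable [SFinite μ]

lemma lintegral_convKernel [IsSFiniteKernel κ] {h : E → ℝ≥0∞} (hh : Measurable h) :
    ∫⁻ z, h z ∂convKernel μ κ = ∫⁻ y, ∫⁻ z, h (y + z) ∂κ y ∂μ := by
  rw [convKernel, lintegral_map hh measurable_add,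
    Measure.lintegral_compProd (f := fun q => h (q.1 + q.2)) (hh.comp measurable_add)]

lemma integral_convKernel [IsSFiniteKernel κ] {h : E → ℝ} (hh : Integrable h (convKernel μ κ)) :
    ∫ z, h z ∂convKernel μ κ = ∫ y, ∫ z, h (y + z) ∂κ y ∂μ := by
  have h_comp : Integrable (fun q : E × E => h (q.1 + q.2)) (μ ⊗ₘ κ) :=
    hh.comp_measurable measurable_add
  rw [convKernel, integral_map measurable_add.aemeasurable hh.aestronglyMeasurable,
    Measure.integral_compProd h_comp]

lemma integrable_integral_convKernel [IsSFiniteKernel κ] {h : E → ℝ}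
    (hh : Integrable h (convKernel μ κ)) : Integrable (fun y => ∫ z, h (y + z) ∂κ y) μ :=
  (show Integrable (fun q : E × E => h (q.1 + q.2)) (μ ⊗ₘ κ) from
    hh.comp_measurable measurable_add).integral_compProd

lemma map_convKernel [IsSFiniteKernel κ] {F : Type*} [MeasurableSpace F] [Add F]
    [MeasurableAdd₂ F] {κ' : Kernel F F} [IsSFiniteKernel κ'] {π : E → F} (hπ : Measurable π)
    (hπ_add : ∀ a b, π (a + b) = π a + π b) (hκ : ∀ a, (κ a).map π = κ' (π a)) :
    (convKernel μ κ).map π = convKernel (μ.map π) κ' := by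
  refine Measure.ext_of_lintegral _ fun h hh => ?_
  rw [lintegral_map hh hπ, lintegral_convKernel (h := fun z => h (π z)) (hh.comp hπ),
    lintegral_convKernel hh, lintegral_map (by fun_prop) hπ]
  refine lintegral_congr fun y => ?_
  rw [← hκ, lintegral_map (by fun_prop) hπ]
  simp only [hπ_add]

lemma eLpNorm'_convKernel_le {F : Type*} [NormedAddCommGroup F] [IsMarkovKernel κ] {p : ℝ}
    (hp : 1 ≤ p) {L : E → F} (hL : StronglyMeasurable L)
    (hL_add : ∀ a b, L (a + b) = L a + L b) :
    eLpNorm' L p (convKernel μ κ) ≤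
      eLpNorm' L p μ + eLpNorm' (fun y => eLpNorm' L p (κ y)) p μ := by
  have : Measurable fun z => ‖L z‖ₑ := hL.enorm
  have fst_term : eLpNorm' (fun q : E × E => L q.1) p (μ ⊗ₘ κ) = eLpNorm' L p μ := by
    simp only [eLpNorm']
    rw [Measure.lintegral_compProd (by fun_prop)]
    simp only [lintegral_const, measure_univ, mul_one]
  have snd_term : eLpNorm' (fun q : E × E => L q.2) p (μ ⊗ₘ κ) =
      eLpNorm' (fun y => eLpNorm' L p (κ y)) p μ := by
    rw [eLpNorm', Measure.lintegral_compProd (by fun_prop)]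
    simp only [lintegral_rpow_enorm_eq_rpow_eLpNorm' (zero_lt_one.trans_le hp)]
    rfl
  calc eLpNorm' L p (convKernel μ κ)
      = eLpNorm' ((fun q => L q.1) + fun q => L q.2) p (μ ⊗ₘ κ) := by
        rw [eLpNorm', convKernel, lintegral_map (by fun_prop) measurable_add]
        simp only [hL_add]
        rfl
    _ ≤ eLpNorm' (fun q => L q.1) p (μ ⊗ₘ κ) + eLpNorm' (fun q => L q.2) p (μ ⊗ₘ κ) :=
        eLpNorm'_add_le (hL.comp_measurable measurable_fst).aestronglyMeasurable
          (hL.comp_measurable measurable_snd).aestronglyMeasurable hp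
    _ = eLpNorm' L p μ + eLpNorm' (fun y => eLpNorm' L p (κ y)) p μ := by rw [fst_term, snd_term]

lemma convKernel_const {G : Type*} [MeasurableSpace G] [AddMonoid G]
    (μ ν : Measure G) [SFinite μ] [SFinite ν] : convKernel μ (Kernel.const G ν) = μ.conv ν := by
  rw [convKernel, Measure.compProd_const, Measure.conv]

end ConvKernel

section Wasserstein

lemma eLpNorm'_map {α β ε : Type*} [MeasurableSpace α] [MeasurableSpace β] [MeasurableSpace ε]
    [TopologicalSpace ε] [ContinuousENorm ε] [OpensMeasurableSpace ε] {p : ℝ} {μ : Measure α}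
    {f : α → β} (hf : Measurable f) {g : β → ε} (hg : Measurable g) :
    eLpNorm' g p (μ.map f) = eLpNorm' (fun a => g (f a)) p μ := by
  rw [eLpNorm', lintegral_map (by fun_prop) hf, eLpNorm']

lemma eLpNorm'_le_add_const {α : Type*} [MeasurableSpace α] {μ : Measure α}
    [IsProbabilityMeasure μ] {p : ℝ} (hp : 1 ≤ p) {f g : α → ℝ≥0∞} (hg : Measurable g) {c : ℝ≥0∞}
    (hfg : ∀ a, f a ≤ g a + c) : eLpNorm' f p μ ≤ eLpNorm' g p μ + c := by
  have hp_pos : 0 < p := zero_lt_one.trans_le hp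
  calc eLpNorm' f p μ ≤ eLpNorm' (g + fun _ => c) p μ :=
        eLpNorm'_mono_enorm_ae hp_pos.le (ae_of_all _ hfg)
    _ ≤ eLpNorm' g p μ + eLpNorm' (fun _ => c) p μ :=
        eLpNorm'_add_le hg.aestronglyMeasurable aestronglyMeasurable_const hp
    _ = eLpNorm' g p μ + c := by
        rw [eLpNorm'_const_of_isProbabilityMeasure _ hp_pos, enorm_eq_self]

open ProbabilityTheory

variable {d : ℕ} {p : ℝ} {μ ν : Measure (Ed d)} {γ : Measure (Ed d × Ed d)}

/-- The `p`-Wasserstein distance as an extended number, so that it is not truncated to `0` when no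
coupling has finite cost; `Wp` is its real part. -/
def eWp (p : ℝ) (μ ν : Measure (Ed d)) : ℝ≥0∞ :=
  ⨅ γ ∈ {γ : Measure (Ed d × Ed d) | IsCoupling γ μ ν}, eLpNorm' (fun q => q.2 - q.1) p γ

lemma toNNReal_Wp (p : ℝ) (μ ν : Measure (Ed d)) : (Wp p μ ν).toNNReal = (eWp p μ ν).toNNReal :=
  Real.toNNReal_coe

lemma IsCoupling.isProbabilityMeasure [IsProbabilityMeasure μ] (hγ : IsCoupling γ μ ν) :
    IsProbabilityMeasure γ :=
  have : IsProbabilityMeasure (γ.map Prod.fst) := hγ.1.symm ▸ inferInstance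
  Measure.isProbabilityMeasure_of_map Prod.fst

lemma isCoupling_prod [IsProbabilityMeasure μ] [IsProbabilityMeasure ν] :
    IsCoupling (μ.prod ν) μ ν :=
  ⟨measurePreserving_fst.map_eq, measurePreserving_snd.map_eq⟩

lemma eWp_le (hγ : IsCoupling γ μ ν) : eWp p μ ν ≤ eLpNorm' (fun q => q.2 - q.1) p γ :=
  iInf₂_le γ hγ

lemma exists_isCoupling_le [IsProbabilityMeasure μ] [IsProbabilityMeasure ν] {ε : ℝ≥0∞}
    (hε : ε ≠ 0) :
    ∃ γ, IsCoupling γ μ ν ∧ eLpNorm' (fun q => q.2 - q.1) p γ ≤ eWp p μ ν + ε := by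
  rcases eq_or_ne (eWp p μ ν) ∞ with h_top | h_top
  · exact ⟨μ.prod ν, isCoupling_prod, by simp [h_top]⟩
  · obtain ⟨γ, h_lt⟩ := iInf_lt_iff.1 (ENNReal.lt_add_right h_top hε)
    obtain ⟨hγ, hγ_lt⟩ := iInf_lt_iff.1 h_lt
    exact ⟨γ, hγ, hγ_lt.le⟩

lemma eWp_self (hp : 0 < p) (μ : Measure (Ed d)) : eWp p μ μ = 0 := by
  have diag : IsCoupling (μ.map fun x => (x, x)) μ μ := by
    constructor <;> rw [Measure.map_map (by fun_prop) (by fun_prop)] <;> exact Measure.map_id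
  refine le_zero_iff.1 ((eWp_le diag).trans_eq ?_)
  rw [eLpNorm'_map (by fun_prop) (by fun_prop)]
  simp [eLpNorm', hp]

lemma memPp_iff (hp : 0 < p) :
    MemPp p μ ↔ IsProbabilityMeasure μ ∧ eLpNorm' id p μ < ∞ := by
  rw [MemPp, eLpNorm', ENNReal.rpow_lt_top_iff_of_pos (one_div_pos.2 hp)]
  rfl

lemma IsCoupling.eLpNorm'_comp_fst (hγ : IsCoupling γ μ ν) :
    eLpNorm' Prod.fst p γ = eLpNorm' id p μ := by
  rw [← hγ.1, eLpNorm'_map measurable_fst measurable_id]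
  rfl

lemma IsCoupling.eLpNorm'_comp_snd (hγ : IsCoupling γ μ ν) :
    eLpNorm' Prod.snd p γ = eLpNorm' id p ν := by
  rw [← hγ.2, eLpNorm'_map measurable_snd measurable_id]
  rfl

lemma eWp_lt_top (hp : 1 ≤ p) (hμ : MemPp p μ) (hν : MemPp p ν) : eWp p μ ν < ∞ := by
  have hp_pos : 0 < p := zero_lt_one.trans_le hp
  obtain ⟨_, hμ_top⟩ := (memPp_iff hp_pos).1 hμ
  obtain ⟨_, hν_top⟩ := (memPp_iff hp_pos).1 hν
  have coupling : IsCoupling (μ.prod ν) μ ν := isCoupling_prod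
  calc eWp p μ ν ≤ eLpNorm' (fun q => q.2 - q.1) p (μ.prod ν) := eWp_le coupling
    _ = eLpNorm' (Prod.snd + -Prod.fst) p (μ.prod ν) := by simp only [sub_eq_add_neg]; rfl
    _ ≤ eLpNorm' id p ν + eLpNorm' id p μ := by
        rw [← coupling.eLpNorm'_comp_fst, ← coupling.eLpNorm'_comp_snd,
          ← eLpNorm'_neg Prod.fst]
        exact eLpNorm'_add_le (by fun_prop) (by fun_prop) hp
    _ < ∞ := ENNReal.add_lt_top.2 ⟨hν_top, hμ_top⟩

lemma MemPp.of_eWp_ne_top (hp : 1 ≤ p) (hμ : MemPp p μ) [IsProbabilityMeasure ν]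
    (h : eWp p μ ν ≠ ∞) : MemPp p ν := by
  have hp_pos : 0 < p := zero_lt_one.trans_le hp
  obtain ⟨_, hμ_top⟩ := (memPp_iff hp_pos).1 hμ
  obtain ⟨γ, hγ, hγ_le⟩ := exists_isCoupling_le (p := p) (μ := μ) (ν := ν) one_ne_zero
  refine (memPp_iff hp_pos).2 ⟨inferInstance, ?_⟩
  calc eLpNorm' id p ν
      = eLpNorm' ((Prod.snd - Prod.fst) + Prod.fst) p γ := by
        rw [sub_add_cancel, hγ.eLpNorm'_comp_snd]
    _ ≤ eLpNorm' (Prod.snd - Prod.fst) p γ + eLpNorm' Prod.fst p γ :=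
        eLpNorm'_add_le (by fun_prop) (by fun_prop) hp
    _ ≤ eWp p μ ν + 1 + eLpNorm' id p μ := by
        rw [hγ.eLpNorm'_comp_fst]
        gcongr
        exact hγ_le
    _ < ∞ := by simp [h.lt_top, hμ_top]

lemma MemPp.conv (hp : 1 ≤ p) (hμ : MemPp p μ) (hν : MemPp p ν) : MemPp p (μ.conv ν) := by
  have hp_pos : 0 < p := zero_lt_one.trans_le hp
  obtain ⟨_, hμ_top⟩ := (memPp_iff hp_pos).1 hμ
  obtain ⟨_, hν_top⟩ := (memPp_iff hp_pos).1 hν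
  refine (memPp_iff hp_pos).2 ⟨inferInstance, ?_⟩
  rw [← convKernel_const]
  refine (eLpNorm'_convKernel_le hp stronglyMeasurable_id fun _ _ => rfl).trans_lt
    (ENNReal.add_lt_top.2 ⟨hμ_top, ?_⟩)
  simpa only [Kernel.const_apply, eLpNorm'_const_of_isProbabilityMeasure _ hp_pos, enorm_eq_self]
    using hν_top

section Gluing

variable {μ₁ μ₂ : Measure (Ed d)} [IsProbabilityMeasure μ₁] [IsProbabilityMeasure μ₂]
  {m : ℕ → Measure (Ed d)} [∀ j, IsProbabilityMeasure (m j)]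
  {Γ : ℕ → Measure (Ed d × Ed d)} {k : Ed d → ℕ} (hk : Measurable k)

lemma isCoupling_convKernel [IsProbabilityMeasure γ] [∀ j, IsProbabilityMeasure (Γ j)]
    (hγ : IsCoupling γ μ₁ ν) (hΓ : ∀ j, IsCoupling (Γ j) μ₂ (m j)) :
    IsCoupling (convKernel γ (selectKernel Γ (hk.comp measurable_snd))) (μ₁.conv μ₂)
      (convKernel ν (selectKernel m hk)) := by
  constructor
  · rw [← convKernel_const, ← hγ.1]
    exact map_convKernel measurable_fst (fun _ _ => rfl) fun _ => (hΓ _).1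
  · rw [← hγ.2]
    exact map_convKernel measurable_snd (fun _ _ => rfl) fun _ => (hΓ _).2

lemma eWp_conv_convKernel_le [IsProbabilityMeasure ν] (hp : 1 ≤ p) :
    eWp p (μ₁.conv μ₂) (convKernel ν (selectKernel m hk)) ≤
      eWp p μ₁ ν + eLpNorm' (fun y => eWp p μ₂ (m (k y))) p ν := by
  refine ENNReal.le_of_forall_pos_le_add fun ε hε _ => ?_
  have hε' : ((ε / 2 : ℝ≥0) : ℝ≥0∞) ≠ 0 := by simpa using hε.ne'
  obtain ⟨γ, hγ, hγ_le⟩ := exists_isCoupling_le (p := p) (μ := μ₁) (ν := ν) hε'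
  choose Γ hΓ hΓ_le using fun j => exists_isCoupling_le (p := p) (μ := μ₂) (ν := m j) hε'
  have := hγ.isProbabilityMeasure
  have := fun j => (hΓ j).isProbabilityMeasure
  have hW : Measurable fun y => eWp p μ₂ (m (k y)) :=
    (measurable_of_countable fun j => eWp p μ₂ (m j)).comp hk
  have conditional_cost :
      eLpNorm' (fun q : Ed d × Ed d => eLpNorm' (fun r => r.2 - r.1) p (Γ (k q.2))) p γ ≤
        eLpNorm' (fun y => eWp p μ₂ (m (k y))) p ν + (ε / 2 : ℝ≥0) := by
    rw [← hγ.2, eLpNorm'_map measurable_snd hW]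
    exact eLpNorm'_le_add_const hp (hW.comp measurable_snd) fun q => hΓ_le (k q.2)
  calc eWp p (μ₁.conv μ₂) (convKernel ν (selectKernel m hk))
      ≤ eLpNorm' (fun q => q.2 - q.1) p (convKernel γ (selectKernel Γ (hk.comp measurable_snd))) :=
        eWp_le (isCoupling_convKernel hk hγ hΓ)
    _ ≤ eLpNorm' (fun q => q.2 - q.1) p γ +
          eLpNorm' (fun q => eLpNorm' (fun r => r.2 - r.1) p (Γ (k q.2))) p γ :=
        eLpNorm'_convKernel_le hp (by fun_prop) fun _ _ => add_sub_add_comm _ _ _ _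
    _ ≤ eWp p μ₁ ν + (ε / 2 : ℝ≥0) +
          (eLpNorm' (fun y => eWp p μ₂ (m (k y))) p ν + (ε / 2 : ℝ≥0)) :=
        add_le_add hγ_le conditional_cost
    _ = eWp p μ₁ ν + eLpNorm' (fun y => eWp p μ₂ (m (k y))) p ν + ε := by
        rw [add_add_add_comm, ← ENNReal.coe_add, add_halves]

end Gluing

end Wasserstein

section OneStepOperator

open ProbabilityTheory

variable {d : ℕ} {p : ℝ} {φ : ℝ≥0 → ℝ≥0∞} {s t M : ℝ} {μt : Measure (Ed d)} {g : Ed d → ℝ}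

/-- The pairs of a measure `ν` and a real cost `c` dominating the penalty of `ν`, over which the
supremum defining `Sop` runs. -/
def admissible (p : ℝ) (φ : ℝ≥0 → ℝ≥0∞) (μt : Measure (Ed d)) (t : ℝ) :
    Set (Measure (Ed d) × ℝ) :=
  {a | MemPp p a.1 ∧ 0 ≤ a.2 ∧ phit φ t (eWp p μt a.1).toNNReal ≤ ENNReal.ofReal a.2}

/-- The value at `x` of playing the pair `a` of a measure and a cost against `g`. -/
def payoff (g : Ed d → ℝ) (a : Measure (Ed d) × ℝ) (x : Ed d) : ℝ :=
  (∫ y, g (x + y) ∂a.1) - a.2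

lemma Sop_eq_sSup_payoff (x : Ed d) :
    Sop p φ μt t g x = sSup (range fun a : admissible p φ μt t => payoff g a x) := by
  rw [Sop]
  congr 1
  ext r
  simp only [toNNReal_Wp, mem_range, Subtype.exists, admissible, Prod.exists, payoff]
  constructor
  · rintro ⟨ν, hν, c, hc, hφc, rfl⟩
    exact ⟨ν, c, ⟨hν, hc, hφc⟩, rfl⟩
  · rintro ⟨ν, c, ⟨hν, hc, hφc⟩, rfl⟩
    exact ⟨ν, hν, c, hc, hφc, rfl⟩

lemma self_zero_mem_admissible (hp : 0 < p) (hφ : IsPenalty p φ) (hμt : MemPp p μt) (t : ℝ) :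
    (μt, 0) ∈ admissible p φ μt t :=
  ⟨hμt, le_rfl, by simp [eWp_self hp, (isPenalty_phit hp.ne' hφ t).map_zero]⟩

lemma payoff_le (hg : IsBoundedLSC M g) {a : Measure (Ed d) × ℝ} (ha : a ∈ admissible p φ μt t)
    (x : Ed d) : payoff g a x ≤ M - a.2 := by
  have := ha.1.1
  exact sub_le_sub_right ((le_abs_self _).trans
    (hg.comp_const_add x).abs_integral_le) _

lemma lowerSemicontinuous_payoff (hg : IsBoundedLSC M g) {a : Measure (Ed d) × ℝ}
    [IsProbabilityMeasure a.1] : LowerSemicontinuous (payoff g a) := by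
  have lsc_integral : LowerSemicontinuous fun x => ∫ y, g (x + y) ∂a.1 :=
    lowerSemicontinuous_integral (fun x => (hg.comp_const_add x).integrable)
      (integrable_const (-M)) (fun x y => (abs_le.1 (hg.abs_le (x + y))).1)
      fun y => hg.lsc.comp (continuous_add_const y)
  exact lsc_integral.add (lowerSemicontinuous_const (z := -a.2))

lemma isLUB_Sop (hp : 0 < p) (hφ : IsPenalty p φ) (hμt : MemPp p μt) (hg : IsBoundedLSC M g)
    (t : ℝ) : IsLUB (range fun a : admissible p φ μt t => payoff g a) (Sop p φ μt t g) := by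
  refine isLUB_pi.2 fun x => ?_
  rw [← range_comp, Sop_eq_sSup_payoff]
  refine isLUB_csSup ⟨_, ⟨_, self_zero_mem_admissible hp hφ hμt t⟩, rfl⟩ ⟨M, ?_⟩
  rintro _ ⟨a, rfl⟩
  exact (payoff_le hg a.2 x).trans (sub_le_self M a.2.2.1)

lemma integral_le_Sop (hp : 0 < p) (hφ : IsPenalty p φ) (hμt : MemPp p μt) (hg : IsBoundedLSC M g)
    (t : ℝ) (x : Ed d) : ∫ y, g (x + y) ∂μt ≤ Sop p φ μt t g x := by
  simpa only [payoff, sub_zero] using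
    (isLUB_Sop hp hφ hμt hg t).1 ⟨⟨_, self_zero_mem_admissible hp hφ hμt t⟩, rfl⟩ x

lemma Sop_mono (hp : 0 < p) (hφ : IsPenalty p φ) (hμt : MemPp p μt) {M' : ℝ} {g' : Ed d → ℝ}
    (hg : IsBoundedLSC M g) (hg' : IsBoundedLSC M' g') (hgg' : g ≤ g') (t : ℝ) :
    Sop p φ μt t g ≤ Sop p φ μt t g' := by
  refine (isLUB_Sop hp hφ hμt hg t).2 ?_
  rintro _ ⟨a, rfl⟩
  have := a.2.1.1
  refine le_trans (fun x => sub_le_sub_right (integral_mono ?_ ?_ fun y => hgg' (x + y)) _)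
    ((isLUB_Sop hp hφ hμt hg' t).1 ⟨a, rfl⟩)
  · exact (hg.comp_const_add x).integrable
  · exact (hg'.comp_const_add x).integrable

lemma isBoundedLSC_Sop (hp : 0 < p) (hφ : IsPenalty p φ) (hμt : MemPp p μt)
    (hg : IsBoundedLSC M g) (t : ℝ) : IsBoundedLSC M (Sop p φ μt t g) where
  abs_le x := by
    have := hμt.1
    refine abs_le.2 ⟨?_, ?_⟩
    · exact (abs_le.1 (hg.comp_const_add x).abs_integral_le).1.trans
        (integral_le_Sop hp hφ hμt hg t x)
    · refine isLUB_le_iff (isLUB_pi.1 (isLUB_Sop hp hφ hμt hg t) x) |>.2 ?_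
      rintro _ ⟨_, ⟨a, rfl⟩, rfl⟩
      exact (payoff_le hg a.2 x).trans (sub_le_self M a.2.2.1)
  lsc := by
    refine lowerSemicontinuous_of_isLUB ?_ (isLUB_Sop hp hφ hμt hg t)
    rintro _ ⟨a, rfl⟩
    have := a.2.1.1
    exact lowerSemicontinuous_payoff hg

section Composition

variable {μ₁ μ₂ ν : Measure (Ed d)} {c C : ℝ} {b : ℕ → Measure (Ed d) × ℝ} {k : Ed d → ℕ}

lemma exists_forall_eWp_le_of_mem_admissible (hp : 1 ≤ p) (hφ : IsPenalty p φ)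
    (hμt : MemPp p μt) (t C : ℝ) :
    ∃ R : ℝ≥0, ∀ a ∈ admissible p φ μt t, a.2 ≤ C → eWp p μt a.1 ≤ R := by
  obtain ⟨R, hR⟩ := (isPenalty_phit (zero_lt_one.trans_le hp).ne' hφ t).exists_forall_le_imp_le
    (C := ENNReal.ofReal C) ENNReal.ofReal_ne_top
  refine ⟨R, fun a ha haC => ?_⟩
  rw [← ENNReal.coe_toNNReal (eWp_lt_top hp hμt ha.1).ne, ENNReal.coe_le_coe]
  exact hR _ (ha.2.2.trans (ENNReal.ofReal_le_ofReal haC))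

lemma eLpNorm'_eWp_ne_top [IsProbabilityMeasure ν] (hp : 1 ≤ p) (hφ : IsPenalty p φ)
    (hμ₂ : MemPp p μ₂) (hb : ∀ j, b j ∈ admissible p φ μ₂ t) (hC : ∀ y, (b (k y)).2 ≤ C) :
    eLpNorm' (fun y => eWp p μ₂ (b (k y)).1) p ν ≠ ∞ := by
  have hp_pos : 0 < p := zero_lt_one.trans_le hp
  obtain ⟨R, hR⟩ := exists_forall_eWp_le_of_mem_admissible hp hφ hμ₂ t C
  refine ne_top_of_le_ne_top (ENNReal.coe_ne_top (r := R)) ?_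
  calc eLpNorm' (fun y => eWp p μ₂ (b (k y)).1) p ν
      ≤ eLpNorm' (fun _ => (R : ℝ≥0∞)) p ν :=
        eLpNorm'_mono_enorm_ae hp_pos.le (ae_of_all _ fun y => hR _ (hb (k y)) (hC y))
    _ = R := by rw [eLpNorm'_const_of_isProbabilityMeasure _ hp_pos, enorm_eq_self]

lemma integrable_cost [IsFiniteMeasure ν] (hb : ∀ j, b j ∈ admissible p φ μ₂ t)
    (hk : Measurable k) (hC : ∀ y, (b (k y)).2 ≤ C) : Integrable (fun y => (b (k y)).2) ν :=
  .of_mem_Icc 0 C ((measurable_of_countable fun j => (b j).2).comp hk).aemeasurable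
    (ae_of_all _ fun y => ⟨(hb (k y)).2.1, hC y⟩)

lemma phit_eLpNorm'_eWp_le [IsProbabilityMeasure ν] (hp : 1 ≤ p) (hφ : IsPenalty p φ)
    (hμ₂ : MemPp p μ₂) (hb : ∀ j, b j ∈ admissible p φ μ₂ t) (hk : Measurable k)
    (hC : ∀ y, (b (k y)).2 ≤ C) :
    phit φ t (eLpNorm' (fun y => eWp p μ₂ (b (k y)).1) p ν).toNNReal ≤
      ENNReal.ofReal (∫ y, (b (k y)).2 ∂ν) := by
  have hp_pos : 0 < p := zero_lt_one.trans_le hp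
  have coe_eWp (j : ℕ) : ((eWp p μ₂ (b j).1).toNNReal : ℝ≥0∞) = eWp p μ₂ (b j).1 :=
    ENNReal.coe_toNNReal (eWp_lt_top hp hμ₂ (hb j).1).ne
  have jensen := (isPenalty_phit hp_pos.ne' hφ t).map_eLpNorm'_le hp_pos (ν := ν)
    ((measurable_of_countable fun j => (eWp p μ₂ (b j).1).toNNReal).comp hk)
    (by simpa only [Function.comp_apply, coe_eWp] using eLpNorm'_eWp_ne_top hp hφ hμ₂ hb hC)
    (integrable_cost hb hk hC) (fun y => (hb (k y)).2.1) fun y => (hb (k y)).2.2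
  simpa only [Function.comp_apply, coe_eWp] using jensen

lemma convKernel_mem_admissible (hp : 1 ≤ p) (hφ : IsPenalty p φ) (hs : 0 ≤ s) (ht : 0 ≤ t)
    (hμ₁ : MemPp p μ₁) (hμ₂ : MemPp p μ₂) (hν : (ν, c) ∈ admissible p φ μ₁ s)
    (hb : ∀ j, b j ∈ admissible p φ μ₂ t) (hk : Measurable k) (hC : ∀ y, (b (k y)).2 ≤ C) :
    (convKernel ν (selectKernel (fun j => (b j).1) hk), c + ∫ y, (b (k y)).2 ∂ν) ∈
      admissible p φ (μ₁.conv μ₂) (s + t) := by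
  obtain ⟨hν_mem, hc, hφc⟩ := hν
  have := hν_mem.1
  have := hμ₁.1
  have := hμ₂.1
  have := fun j => (hb j).1.1
  have W_le := eWp_conv_convKernel_le (μ₁ := μ₁) (μ₂ := μ₂) (ν := ν) (m := fun j => (b j).1) hk hp
  have W₁_ne_top : eWp p μ₁ ν ≠ ∞ := (eWp_lt_top hp hμ₁ hν_mem).ne
  have W₂_ne_top := eLpNorm'_eWp_ne_top (ν := ν) hp hφ hμ₂ hb hC
  have cost_nonneg : 0 ≤ ∫ y, (b (k y)).2 ∂ν := integral_nonneg fun y => (hb (k y)).2.1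
  have sum_ne_top := ENNReal.add_ne_top.2 ⟨W₁_ne_top, W₂_ne_top⟩
  refine ⟨(hμ₁.conv hp hμ₂).of_eWp_ne_top hp (ne_top_of_le_ne_top sum_ne_top W_le),
    add_nonneg hc cost_nonneg, ?_⟩
  calc phit φ (s + t) (eWp p (μ₁.conv μ₂)
        (convKernel ν (selectKernel (fun j => (b j).1) hk))).toNNReal
      ≤ phit φ (s + t) ((eWp p μ₁ ν).toNNReal +
          (eLpNorm' (fun y => eWp p μ₂ (b (k y)).1) p ν).toNNReal) := by
        rw [← ENNReal.toNNReal_add W₁_ne_top W₂_ne_top]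
        exact (isPenalty_phit (zero_lt_one.trans_le hp).ne' hφ (s + t)).mono
          (ENNReal.toNNReal_mono sum_ne_top W_le)
    _ ≤ phit φ s (eWp p μ₁ ν).toNNReal +
          phit φ t (eLpNorm' (fun y => eWp p μ₂ (b (k y)).1) p ν).toNNReal :=
        phit_add_add_le hφ hs ht _ _
    _ ≤ ENNReal.ofReal c + ENNReal.ofReal (∫ y, (b (k y)).2 ∂ν) :=
        add_le_add hφc (phit_eLpNorm'_eWp_le hp hφ hμ₂ hb hk hC)
    _ = ENNReal.ofReal (c + ∫ y, (b (k y)).2 ∂ν) := (ENNReal.ofReal_add hc cost_nonneg).symm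

lemma integrable_integral_comp_add [IsProbabilityMeasure ν] (hg : IsBoundedLSC M g)
    {m : ℕ → Measure (Ed d)} [∀ j, IsProbabilityMeasure (m j)] (hk : Measurable k) (x : Ed d) :
    Integrable (fun y => ∫ z, g (x + y + z) ∂m (k y)) ν := by
  simpa only [selectKernel_apply, add_assoc] using integrable_integral_convKernel (μ := ν)
    (κ := selectKernel m hk) (hg.comp_const_add x).integrable

lemma integrable_payoff [IsProbabilityMeasure ν] (hg : IsBoundedLSC M g)
    (hb : ∀ j, b j ∈ admissible p φ μ₂ t) (hk : Measurable k) (hC : ∀ y, (b (k y)).2 ≤ C)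
    (x : Ed d) : Integrable (fun y => payoff g (b (k y)) (x + y)) ν :=
  have := fun j => (hb j).1.1
  (integrable_integral_comp_add (m := fun j => (b j).1) hg hk x).sub (integrable_cost hb hk hC)

lemma payoff_convKernel [IsProbabilityMeasure ν] (hg : IsBoundedLSC M g)
    (hb : ∀ j, b j ∈ admissible p φ μ₂ t) (hk : Measurable k) (hC : ∀ y, (b (k y)).2 ≤ C)
    (c : ℝ) (x : Ed d) :
    payoff g (convKernel ν (selectKernel (fun j => (b j).1) hk), c + ∫ y, (b (k y)).2 ∂ν) x =
      (∫ y, payoff g (b (k y)) (x + y) ∂ν) - c := by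
  have := fun j => (hb j).1.1
  simp only [payoff]
  rw [integral_convKernel (hg.comp_const_add x).integrable,
    integral_sub (integrable_integral_comp_add (m := fun j => (b j).1) hg hk x)
      (integrable_cost hb hk hC)]
  simp only [selectKernel_apply, ← add_assoc]
  ring

lemma Sop_Sop_le (hp : 1 ≤ p) (hφ : IsPenalty p φ) (hs : 0 ≤ s) (ht : 0 ≤ t)
    (hμ₁ : MemPp p μ₁) (hμ₂ : MemPp p μ₂) (hg : IsBoundedLSC M g) :
    Sop p φ μ₁ s (Sop p φ μ₂ t g) ≤ Sop p φ (μ₁.conv μ₂) (s + t) g := by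
  have hp_pos : 0 < p := zero_lt_one.trans_le hp
  have hSg : IsBoundedLSC M (Sop p φ μ₂ t g) := isBoundedLSC_Sop hp_pos hφ hμ₂ hg t
  refine (isLUB_Sop hp_pos hφ hμ₁ hSg s).2 ?_
  rintro _ ⟨⟨⟨ν, c⟩, hν⟩, rfl⟩ x
  have := hν.1.1
  refine le_of_forall_pos_le_add fun ε hε => ?_
  obtain ⟨a, k, hk, ha⟩ := exists_measurable_index_lt_add
    (fun a : admissible p φ μ₂ t => have := a.2.1.1; lowerSemicontinuous_payoff hg)
    (isLUB_Sop hp_pos hφ hμ₂ hg t) hε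
  have hkx : Measurable fun y => k (x + y) := hk.comp (measurable_const_add x)
  have hb (j : ℕ) : (a j : Measure (Ed d) × ℝ) ∈ admissible p φ μ₂ t := (a j).2
  have cost_le (y : Ed d) : (a (k (x + y))).1.2 ≤ 2 * M + ε := by
    linarith only [payoff_le hg (hb (k (x + y))) (x + y), ha (x + y),
      neg_le_of_abs_le (hSg.abs_le (x + y))]
  have h_composite := (isLUB_Sop hp_pos hφ (hμ₁.conv hp hμ₂) hg (s + t)).1
    ⟨⟨_, convKernel_mem_admissible hp hφ hs ht hμ₁ hμ₂ hν hb hkx cost_le⟩, rfl⟩ x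
  simp only [payoff_convKernel hg hb hkx cost_le] at h_composite
  have payoff_int := integrable_payoff (ν := ν) hg hb hkx cost_le x
  calc (∫ y, Sop p φ μ₂ t g (x + y) ∂ν) - c
      ≤ (∫ y, (payoff g (a (k (x + y))) (x + y) + ε) ∂ν) - c :=
        sub_le_sub_right (integral_mono (hSg.comp_const_add x).integrable
          (payoff_int.add (integrable_const ε)) fun y => (ha (x + y)).le) c
    _ = (∫ y, payoff g (a (k (x + y))) (x + y) ∂ν) - c + ε := by
        rw [integral_add payoff_int (integrable_const ε), integral_const, probReal_univ, one_smul]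
        ring
    _ ≤ Sop p φ (μ₁.conv μ₂) (s + t) g x + ε := by gcongr

end Composition

end OneStepOperator

section Semigroup

variable {d : ℕ} {p : ℝ} {φ : ℝ≥0 → ℝ≥0∞} {μ : ℝ → Measure (Ed d)} {f g : Ed d → ℝ}
  {M M' h r : ℝ}

lemma integral_conv_le_Sop {μ₁ μ₂ : Measure (Ed d)} (hp : 0 < p) (hφ : IsPenalty p φ)
    (hμ₁ : MemPp p μ₁) [IsProbabilityMeasure μ₂] (hf : IsBoundedLSC M f) (hg : IsBoundedLSC M' g)
    (hfg : ∀ x, ∫ y, f (x + y) ∂μ₂ ≤ g x) (t : ℝ) (x : Ed d) :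
    ∫ y, f (x + y) ∂μ₁.conv μ₂ ≤ Sop p φ μ₁ t g x := by
  have := hμ₁.1
  have f_int : Integrable (fun z => f (x + z)) (convKernel μ₁ (.const (Ed d) μ₂)) :=
    (hf.comp_const_add x).integrable
  calc ∫ z, f (x + z) ∂μ₁.conv μ₂
      = ∫ y, ∫ z, f (x + (y + z)) ∂μ₂ ∂μ₁ := by
        rw [← convKernel_const, integral_convKernel f_int]; rfl
    _ ≤ ∫ y, g (x + y) ∂μ₁ := by
        refine integral_mono (integrable_integral_convKernel f_int)
          (hg.comp_const_add x).integrable fun y => ?_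
        simpa only [ProbabilityTheory.Kernel.const_apply, ← add_assoc] using hfg (x + y)
    _ ≤ Sop p φ μ₁ t g x := integral_le_Sop hp hφ hμ₁ hg t x

lemma isBoundedLSC_iterate_Sop {ν : Measure (Ed d)} (hp : 0 < p) (hφ : IsPenalty p φ)
    (hν : MemPp p ν) (hg : IsBoundedLSC M g) (h : ℝ) (k : ℕ) :
    IsBoundedLSC M ((Sop p φ ν h)^[k] g) := by
  induction k with
  | zero => exact hg
  | succ k ih =>
    rw [Function.iterate_succ_apply']
    exact isBoundedLSC_Sop hp hφ hν ih h

lemma add_natCast_succ_mul (r h : ℝ) (k : ℕ) : r + (k + 1 : ℕ) * h = h + (r + k * h) := by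
  push_cast
  ring

lemma integral_le_iterate_Sop (hp : 0 < p) (hφ : IsPenalty p φ) (hμ : IsConvSemigroup p μ)
    (hf : IsBoundedLSC M f) (hh : 0 ≤ h) (hr : 0 ≤ r) (k : ℕ) (x : Ed d) :
    ∫ y, f (x + y) ∂μ (r + k * h) ≤ (Sop p φ (μ h) h)^[k] (Sop p φ (μ r) r f) x := by
  obtain ⟨-, μ_add, μ_mem⟩ := hμ
  induction k generalizing x with
  | zero => simpa using integral_le_Sop hp hφ (μ_mem r hr) hf r x
  | succ k ih =>
    have hrk : 0 ≤ r + k * h := by positivity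
    have := (μ_mem _ hrk).1
    rw [Function.iterate_succ_apply', add_natCast_succ_mul, μ_add h _ hh hrk]
    exact integral_conv_le_Sop hp hφ (μ_mem h hh) hf
      (isBoundedLSC_iterate_Sop hp hφ (μ_mem h hh) (isBoundedLSC_Sop hp hφ (μ_mem r hr) hf r) h k)
      ih h x

lemma iterate_Sop_le (hp : 1 ≤ p) (hφ : IsPenalty p φ) (hμ : IsConvSemigroup p μ)
    (hf : IsBoundedLSC M f) (hh : 0 ≤ h) (hr : 0 ≤ r) (k : ℕ) :
    (Sop p φ (μ h) h)^[k] (Sop p φ (μ r) r f) ≤ Sop p φ (μ (r + k * h)) (r + k * h) f := by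
  have hp_pos : 0 < p := zero_lt_one.trans_le hp
  obtain ⟨-, μ_add, μ_mem⟩ := hμ
  induction k with
  | zero => simp
  | succ k ih =>
    have hrk : 0 ≤ r + k * h := by positivity
    rw [Function.iterate_succ_apply', add_natCast_succ_mul, μ_add h _ hh hrk]
    calc Sop p φ (μ h) h ((Sop p φ (μ h) h)^[k] (Sop p φ (μ r) r f))
        ≤ Sop p φ (μ h) h (Sop p φ (μ (r + k * h)) (r + k * h) f) :=
          Sop_mono hp_pos hφ (μ_mem h hh)
            (isBoundedLSC_iterate_Sop hp_pos hφ (μ_mem h hh)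
              (isBoundedLSC_Sop hp_pos hφ (μ_mem r hr) hf r) h k)
            (isBoundedLSC_Sop hp_pos hφ (μ_mem _ hrk) hf _) ih h
      _ ≤ Sop p φ ((μ h).conv (μ (r + k * h))) (h + (r + k * h)) f :=
          Sop_Sop_le hp hφ hh hrk (μ_mem h hh) (μ_mem _ hrk) hf

theorem stmt_11_general (hp : 1 ≤ p) (hφ : IsPenalty p φ) (hμ : IsConvSemigroup p μ)
    (hf : IsBoundedLSC M f) {t : ℝ} (ht : 0 ≤ t) (n : ℕ) (x : Ed d) :
    (∫ y, f (x + y) ∂μ t) ≤ SiterN p φ μ n t f x ∧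
      SiterN p φ μ n t f x ≤ Sop p φ (μ t) t f x := by
  have step_nonneg : (0 : ℝ) ≤ (2 ^ n)⁻¹ := by positivity
  have remainder_nonneg : 0 ≤ t - ⌊(2 : ℝ) ^ n * t⌋₊ * ((2 : ℝ) ^ n)⁻¹ := by
    rw [sub_nonneg, ← div_eq_mul_inv, div_le_iff₀ (by positivity), mul_comm t]
    exact Nat.floor_le (by positivity)
  have lower := integral_le_iterate_Sop (zero_lt_one.trans_le hp) hφ hμ hf step_nonneg
    remainder_nonneg ⌊(2 : ℝ) ^ n * t⌋₊ x
  have upper := iterate_Sop_le hp hφ hμ hf step_nonneg remainder_nonneg ⌊(2 : ℝ) ^ n * t⌋₊ x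
  rw [sub_add_cancel] at lower upper
  exact ⟨lower, upper⟩

end Semigroup

/-- `S^μ(t)f ≤ 𝒮ⁿ(t)f ≤ S(t)f`. -/
theorem stmt_11 (d : ℕ) (hd : 1 ≤ d) (p : ℝ) (hp : 1 < p)
    (φ : ℝ≥0 → ℝ≥0∞) (hφ : IsPenalty p φ)
    (μ : ℝ → Measure (Ed d)) (hμ : IsConvSemigroup p μ)
    (f : C₀(Ed d, ℝ)) (t : ℝ) (ht : 0 ≤ t) (n : ℕ) (x : Ed d) :
    (∫ y, f (x + y) ∂(μ t)) ≤ SiterN p φ μ n t (⇑f) x ∧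
      SiterN p φ μ n t (⇑f) x ≤ Sop p φ (μ t) t (⇑f) x := by
  exact stmt_11_general hp.le hφ hμ
    ⟨f.toBCF.norm_coe_le_norm, f.continuous.lowerSemicontinuous⟩ ht n x
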